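/- Let w ∈ ℝ be such that w + n/2 is not a positive integer. Let U ⊆ ℝ^{n+2} ∖ {0} be an open cone and let f̃₀ be a smooth function on U with Xf̃₀ = w f̃₀ on U. Then there exists a smooth function f̃ on U such that Xf̃ = w f̃ on U, f̃(y) = f̃₀(y) for every y ∈ N ∩ U, and Δ̃f̃ vanishes to infinite order at every point of N ∩ U. (This is the existence of a homogeneous harmonic extension, to infinite order along the null cone, of a density of weight w in the unobstructed case.) -/

import Mathlib

/-!
The extension is sought as a series `∑ Qᵏ fₖ` with `fₖ` homogeneous of degree `w - 2k` and `f₀` the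
given function. On functions homogeneous of degree `d` the commutator `[Δ̃, Qᵏ]` is multiplication
by `4k (d + n/2 + k) Qᵏ⁻¹` (`laplt_Q_pow_mul`), so `Δ̃(Qᵏ fₖ) = Qᵏ Δ̃fₖ + 4k (w + n/2 - k) Qᵏ⁻¹ fₖ`.
As `w + n/2` is not a positive integer, the recursion `4k (w + n/2 - k) fₖ = -Δ̃fₖ₋₁` can be solved
for every `k` (`coeffF`), and the Laplacian of the partial sum up to `K` telescopes to `Q^K Δ̃f_K`
(`laplt_partial_sum`), which vanishes to order `K` on the null cone.

The formal series is turned into a function by Borel summation (`borel_sum`). To keep homogeneity,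
it is written as `∑ (rᵏ fₖ) sᵏ`, where `r` is the squared Euclidean norm and `s = Q / r` is
homogeneous of degree `0`; then each term `rᵏ fₖ sᵏ χ(s / εₖ)` is homogeneous of degree `w`. If the
`εₖ` decrease fast enough, the sum converges with all its derivatives, locally uniformly on `U`
(`borel_term_bound`, `tsum_test_functions`). The sum agrees with the `K`-th partial sum to order `K`
along the null cone, so its Laplacian vanishes there to every order (`FlatTo.laplt`).
-/

open Matrix

noncomputable section

abbrev Idx (p q : ℕ) : Type := Unit ⊕ (Fin (p + q)) ⊕ Unit

/-- The diagonal quadratic form of signature `(p,q)` on `ℝ^n`, `n = p + q`. -/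
def hMat (p q : ℕ) : Matrix (Fin (p + q)) (Fin (p + q)) ℝ :=
  Matrix.diagonal fun i => if (i : ℕ) < p then (1 : ℝ) else -1

/-- The quadratic form of signature `(p+1,q+1)` on `ℝ^{n+2}`, in block form
`[[0,0,1],[0,h,0],[1,0,0]]`. -/
def htMat (p q : ℕ) : Matrix (Idx p q) (Idx p q) ℝ :=
  Matrix.of fun I J =>
    match I, J with
    | Sum.inl _, Sum.inr (Sum.inr _) => (1 : ℝ)
    | Sum.inr (Sum.inr _), Sum.inl _ => 1
    | Sum.inr (Sum.inl i), Sum.inr (Sum.inl j) => hMat p q i j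
    | _, _ => 0

/-- `Q(x) = Σ h̃_{IJ} x^I x^J`. -/
def QForm (p q : ℕ) (x : Idx p q → ℝ) : ℝ := ∑ I, ∑ J, htMat p q I J * x I * x J

/-- The partial derivative `∂_I f`. -/
def pderiv (p q : ℕ) (I : Idx p q) (f : (Idx p q → ℝ) → ℝ) : (Idx p q → ℝ) → ℝ :=
  fun x => fderiv ℝ f x (Pi.single I 1)

/-- The ambient Laplacian `Δ̃f = Σ h̃^{IJ} ∂_I ∂_J f`. -/
def laplt (p q : ℕ) (f : (Idx p q → ℝ) → ℝ) : (Idx p q → ℝ) → ℝ :=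
  fun x => ∑ I, ∑ J, (htMat p q)⁻¹ I J * pderiv p q I (pderiv p q J f) x

/-- The Euler operator `Xf = Σ x^I ∂_I f`. -/
def euler (p q : ℕ) (f : (Idx p q → ℝ) → ℝ) : (Idx p q → ℝ) → ℝ :=
  fun x => ∑ I, x I * pderiv p q I f x

/-- The null cone `N = {x ≠ 0 : Q(x) = 0}` of `h̃`. -/
def nullCone (p q : ℕ) : Set (Idx p q → ℝ) := {x | x ≠ 0 ∧ QForm p q x = 0}

/-- A function vanishes to infinite order at `y` if its value and all iterated
derivatives of every order vanish at `y`. -/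
def VanishesToInfOrderAt (p q : ℕ) (f : (Idx p q → ℝ) → ℝ) (y : Idx p q → ℝ) : Prop :=
  ∀ k : ℕ, iteratedFDeriv ℝ k f y = 0

/-- An open cone in `ℝ^{n+2} ∖ {0}`. -/
def IsOpenCone (p q : ℕ) (U : Set (Idx p q → ℝ)) : Prop :=
  IsOpen U ∧ (∀ x ∈ U, x ≠ 0) ∧ ∀ x ∈ U, ∀ l : ℝ, 0 < l → l • x ∈ U

/-- The constant `c_m` with `c_m⁻¹ = (-4)^{m-1} ((m-1)!)²`. -/
def cConst (m : ℕ) : ℝ := ((-4 : ℝ) ^ (m - 1) * ((m - 1).factorial : ℝ) ^ 2)⁻¹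

/-! ### Estimates for cut-off powers -/

/-- A smooth cutoff on the line, equal to `1` on `[-1, 1]` and supported in `[-2, 2]`. -/
def chi : ℝ → ℝ := (⟨1, 2, one_pos, one_lt_two⟩ : ContDiffBump (0 : ℝ))

theorem chi_contDiff : ContDiff ℝ (⊤ : ℕ∞) chi := ContDiffBump.contDiff _

theorem chi_compact : HasCompactSupport chi := ContDiffBump.hasCompactSupport _

theorem chi_eventually_one : chi =ᶠ[nhds 0] fun _ => 1 := ContDiffBump.eventuallyEq_one _

section Borel

variable {E : Type*} [NormedAddCommGroup E] [NormedSpace ℝ E]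

theorem exists_bound_iteratedFDeriv {f : E → ℝ} (hf : ContDiff ℝ (⊤ : ℕ∞) f)
    (hc : HasCompactSupport f) (m : ℕ) :
    ∃ C : ℝ, 1 ≤ C ∧ ∀ i ≤ m, ∀ x, ‖iteratedFDeriv ℝ i f x‖ ≤ C := by
  have h1 : ∀ i, ∃ C : ℝ, ∀ x, ‖iteratedFDeriv ℝ i f x‖ ≤ C := fun i =>
    (hc.iteratedFDeriv i).exists_bound_of_continuous
      (hf.continuous_iteratedFDeriv (by exact_mod_cast le_top))
  choose C hC using h1
  refine ⟨1 + ∑ i ∈ Finset.range (m + 1), |C i|, ?_, fun i hi x => ?_⟩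
  · have : 0 ≤ ∑ i ∈ Finset.range (m + 1), |C i| := Finset.sum_nonneg fun _ _ => abs_nonneg _
    linarith
  · have := Finset.single_le_sum (f := fun i => |C i|) (fun _ _ => abs_nonneg _)
      (Finset.mem_range.2 (Nat.lt_succ_of_le hi))
    have h2 := hC i x
    have h3 := le_abs_self (C i)
    linarith

/-- The estimate behind Borel summation: `G S^k χ(S/ε) = G ε^k ψ(S/ε)` with `ψ(t) = t^k χ(t)`, and
each derivative of `ψ(S/ε)` costs at most a factor of order `ε⁻¹`. -/
theorem borel_term_bound {G S : E → ℝ} (hG : ContDiff ℝ (⊤ : ℕ∞) G) (hGc : HasCompactSupport G)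
    (hS : ContDiff ℝ (⊤ : ℕ∞) S) (hSc : HasCompactSupport S) (k : ℕ) :
    ∃ C : ℝ, 0 ≤ C ∧ ∀ ε : ℝ, 0 < ε → ε ≤ 1 → ∀ m < k, ∀ x,
      ‖iteratedFDeriv ℝ m (fun x => G x * (S x ^ k * chi (S x / ε))) x‖ ≤ C * ε := by
  set ψ : ℝ → ℝ := fun t => t ^ k * chi t with hψ
  have hψs : ContDiff ℝ (⊤ : ℕ∞) ψ := (contDiff_id.pow k).mul chi_contDiff
  have hψc : HasCompactSupport ψ := chi_compact.mul_left
  obtain ⟨CG, hCG1, hCG⟩ := exists_bound_iteratedFDeriv hG hGc k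
  obtain ⟨A, hA1, hA⟩ := exists_bound_iteratedFDeriv hS hSc k
  obtain ⟨Cψ, hCψ1, hCψ⟩ := exists_bound_iteratedFDeriv hψs hψc k
  refine ⟨2 ^ k * (CG * (k.factorial * Cψ * A ^ k)), by positivity, fun ε hε hε1 m hm x => ?_⟩
  have hSε : ContDiff ℝ (⊤ : ℕ∞) (fun x => ε⁻¹ • S x) := hS.const_smul ε⁻¹
  have hP : ContDiff ℝ (⊤ : ℕ∞) (ψ ∘ fun x => ε⁻¹ • S x) := hψs.comp hSε
  have heq : (fun x => G x * (S x ^ k * chi (S x / ε))) =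
      fun x => G x * (ε ^ k • (ψ ∘ fun x => ε⁻¹ • S x)) x := by
    funext x
    simp only [hψ, Pi.smul_apply, Function.comp_apply, smul_eq_mul, mul_pow]
    rw [div_eq_inv_mul]
    have h1 : ε ^ k * ε⁻¹ ^ k = 1 := by rw [← mul_pow, mul_inv_cancel₀ hε.ne', one_pow]
    linear_combination (-(G x * S x ^ k * chi (ε⁻¹ * S x))) * h1
  have hl : ∀ l < k, ‖iteratedFDeriv ℝ l (ε ^ k • (ψ ∘ fun x => ε⁻¹ • S x)) x‖ ≤
      (k.factorial * Cψ * A ^ k) * ε := by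
    intro l hl
    rw [iteratedFDeriv_const_smul_apply (hP.contDiffAt.of_le (by exact_mod_cast le_top)),
      norm_smul, Real.norm_of_nonneg (by positivity)]
    have h1 := norm_iteratedFDeriv_comp_le (n := l) hψs hSε (by exact_mod_cast le_top) x
      (C := Cψ) (D := A / ε) (fun i hi => hCψ i (by omega) _) (fun i hi1 hi => by
        have := iteratedFDeriv_const_smul_apply' (a := ε⁻¹) (i := i) (x := x) (f := S)
          (hS.contDiffAt.of_le (by exact_mod_cast le_top))
        rw [this, norm_smul, Real.norm_of_nonneg (by positivity)]
        have h2 := hA i (by omega) x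
        have h3 : 1 ≤ A / ε := by rw [le_div_iff₀ hε]; linarith
        calc ε⁻¹ * ‖iteratedFDeriv ℝ i S x‖ ≤ ε⁻¹ * A := by gcongr
          _ = (A / ε) ^ 1 := by rw [pow_one]; ring
          _ ≤ (A / ε) ^ i := pow_le_pow_right₀ h3 hi1)
    have h4 : ε ^ k * (A / ε) ^ l ≤ A ^ k * ε := by
      obtain ⟨d, rfl⟩ := Nat.exists_eq_add_of_lt hl
      have : ε ^ (l + d + 1) * (A / ε) ^ l = A ^ l * (ε ^ (d + 1)) := by
        rw [div_pow]; field_simp; ring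
      rw [this]
      have h5 : ε ^ (d + 1) ≤ ε := by
        have := pow_le_pow_of_le_one hε.le hε1 (Nat.succ_le_succ (Nat.zero_le d))
        simpa using this
      have h6 : A ^ l ≤ A ^ (l + d + 1) := pow_le_pow_right₀ hA1 (by omega)
      gcongr
    have h7 : (l.factorial : ℝ) ≤ k.factorial := by
      exact_mod_cast Nat.factorial_le hl.le
    calc _ ≤ ε ^ k * (l.factorial * Cψ * (A / ε) ^ l) := by gcongr
      _ = (l.factorial * Cψ) * (ε ^ k * (A / ε) ^ l) := by ring
      _ ≤ (k.factorial * Cψ) * (A ^ k * ε) := by gcongr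
      _ = _ := by ring
  rw [heq]
  have hP' : ContDiff ℝ (⊤ : ℕ∞) (ε ^ k • (ψ ∘ fun x => ε⁻¹ • S x)) := hP.const_smul (ε ^ k)
  refine (norm_iteratedFDeriv_mul_le hG hP' x (n := m) (by exact_mod_cast le_top)).trans ?_
  calc _ ≤ ∑ i ∈ Finset.range (m + 1), (m.choose i : ℝ) * CG *
          ((k.factorial * Cψ * A ^ k) * ε) := by
        refine Finset.sum_le_sum fun i hi => ?_
        have := Finset.mem_range.1 hi
        gcongr
        · exact hCG i (by omega) x
        · exact hl _ (by omega)
    _ = (∑ i ∈ Finset.range (m + 1), (m.choose i : ℝ)) *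
          (CG * (k.factorial * Cψ * A ^ k) * ε) := by
        rw [Finset.sum_mul]; exact Finset.sum_congr rfl fun _ _ => by ring
    _ = 2 ^ m * (CG * (k.factorial * Cψ * A ^ k) * ε) := by
        congr 1; exact_mod_cast Nat.sum_range_choose m
    _ ≤ 2 ^ k * (CG * (k.factorial * Cψ * A ^ k) * ε) := by
        gcongr
        exact one_le_two
    _ = _ := by ring

/-- Termwise differentiation of a series of test functions whose `k`-th term has its first `k`
derivatives bounded by `2⁻ᵏ` for large `k`. -/
theorem tsum_test_functions {v : ℕ → E → ℝ} (hv : ∀ k, ContDiff ℝ (⊤ : ℕ∞) (v k))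
    (hvc : ∀ k, HasCompactSupport (v k)) (J : ℕ)
    (hb : ∀ k, J ≤ k → ∀ m < k, ∀ x, ‖iteratedFDeriv ℝ m (v k) x‖ ≤ (1 / 2 : ℝ) ^ k) :
    ContDiff ℝ (⊤ : ℕ∞) (fun x => ∑' k, v k x) ∧
    (∀ m x, iteratedFDeriv ℝ m (fun x => ∑' k, v k x) x = ∑' k, iteratedFDeriv ℝ m (v k) x) ∧
    (∀ x z, fderiv ℝ (fun x => ∑' k, v k x) x z = ∑' k, fderiv ℝ (v k) x z) := by
  have h1 : ∀ k m, ∃ C : ℝ, ∀ x, ‖iteratedFDeriv ℝ m (v k) x‖ ≤ C := fun k m => by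
    obtain ⟨C, _, h⟩ := exists_bound_iteratedFDeriv (hv k) (hvc k) m
    exact ⟨C, h m le_rfl⟩
  choose B hB using h1
  classical
  set b : ℕ → ℕ → ℝ := fun m k => if J ≤ k ∧ m < k then (1 / 2 : ℝ) ^ k else B k m with hbdef
  have hbs : ∀ m, Summable (b m) := fun m => by
    rw [← summable_nat_add_iff (J + m + 1)]
    have : (fun k => b m (k + (J + m + 1))) = fun k => (1 / 2 : ℝ) ^ (k + (J + m + 1)) := by
      funext k
      simp only [hbdef]
      rw [if_pos ⟨by omega, by omega⟩]
    rw [this, summable_nat_add_iff]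
    exact summable_geometric_two
  have hbb : ∀ (m k : ℕ) (x : E), ‖iteratedFDeriv ℝ m (v k) x‖ ≤ b m k := fun m k x => by
    simp only [hbdef]
    split_ifs with h
    · exact hb k h.1 m h.2 x
    · exact hB k m x
  refine ⟨contDiff_tsum hv (fun m _ => hbs m) (fun m k x _ => hbb m k x),
    fun m x => iteratedFDeriv_tsum_apply hv (fun m _ => hbs m) (fun m k x _ => hbb m k x)
      (by exact_mod_cast le_top) x, fun x z => ?_⟩
  have hb1 : ∀ k x, ‖fderiv ℝ (v k) x‖ ≤ b 1 k := fun k x => by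
    rw [← norm_iteratedFDeriv_one]; exact hbb 1 k x
  have h0 : Summable fun k => v k x := by
    refine Summable.of_norm_bounded (hbs 0) fun k => ?_
    have := hbb 0 k x
    rwa [norm_iteratedFDeriv_zero] at this
  rw [fderiv_tsum_apply (hbs 1) (fun k => (hv k).differentiable (by simp)) hb1 h0]
  exact (ContinuousLinearMap.apply ℝ ℝ z).map_tsum
    (Summable.of_norm_bounded (hbs 1) fun k => hb1 k x)

/-! ### Localisation by bump functions -/

theorem contDiff_mul_of_tsupport {b g : E → ℝ} {U : Set E} (hU : IsOpen U)
    (hb : ContDiff ℝ (⊤ : ℕ∞) b) (hbU : tsupport b ⊆ U) (hg : ContDiffOn ℝ (⊤ : ℕ∞) g U) :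
    ContDiff ℝ (⊤ : ℕ∞) (fun x => b x * g x) := by
  rw [contDiff_iff_contDiffAt]
  intro x
  by_cases hx : x ∈ tsupport b
  · exact hb.contDiffAt.mul (hg.contDiffAt (hU.mem_nhds (hbU hx)))
  · have h0 : (fun x => b x * g x) =ᶠ[nhds x] fun _ => 0 := by
      filter_upwards [notMem_tsupport_iff_eventuallyEq.1 hx] with z hz
      simp [hz]
    exact contDiffAt_const.congr_of_eventuallyEq h0

/-- Countably many test functions on `U` such that every point of `U` has a neighbourhood on which
one of them is `1`. They replace an exhaustion by compact sets in the choice of the `εₖ`. -/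
theorem exists_bump_cover [FiniteDimensional ℝ E] {U : Set E} (hU : IsOpen U) :
    ∃ b : ℕ → E → ℝ, (∀ j, ContDiff ℝ (⊤ : ℕ∞) (b j)) ∧ (∀ j, HasCompactSupport (b j)) ∧
      (∀ j, tsupport (b j) ⊆ U) ∧ ∀ x ∈ U, ∃ j, b j =ᶠ[nhds x] fun _ => 1 := by
  rcases U.eq_empty_or_nonempty with rfl | hne
  · refine ⟨fun _ _ => 0, fun _ => contDiff_const, fun _ => HasCompactSupport.zero, fun _ => ?_,
      fun x hx => hx.elim⟩
    simp [tsupport, Function.support]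
  have h1 : ∀ x ∈ U, ∃ b : ContDiffBump x, tsupport b ⊆ U := fun x hx => by
    obtain ⟨r, hr, hrU⟩ := Metric.isOpen_iff.1 hU x hx
    refine ⟨⟨r / 4, r / 2, by positivity, by linarith⟩, ?_⟩
    rw [ContDiffBump.tsupport_eq]
    exact (Metric.closedBall_subset_ball (by simp only; linarith)).trans hrU
  choose! c hc using h1
  have : ProperSpace E := FiniteDimensional.proper ℝ E
  obtain ⟨t, htU, htc, hcov⟩ := TopologicalSpace.countable_cover_nhdsWithin (s := U)
    (f := fun x => Metric.ball x (c x).rIn)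
    (fun x _ => mem_nhdsWithin_of_mem_nhds (Metric.ball_mem_nhds x (c x).rIn_pos))
  have htne : t.Nonempty := by
    obtain ⟨x, hx⟩ := hne
    obtain ⟨y, hy, -⟩ := Set.mem_iUnion₂.1 (hcov hx)
    exact ⟨y, hy⟩
  obtain ⟨e, he⟩ := htc.exists_eq_range htne
  have heU : ∀ j, e j ∈ U := fun j => htU (he ▸ Set.mem_range_self j)
  refine ⟨fun j => c (e j), fun j => (c (e j)).contDiff, fun j => (c (e j)).hasCompactSupport,
    fun j => hc _ (heU j), fun x hx => ?_⟩
  obtain ⟨y, hy, hxy⟩ := Set.mem_iUnion₂.1 (hcov hx)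
  rw [he] at hy
  obtain ⟨j, rfl⟩ := hy
  exact ⟨j, (c (e j)).eventuallyEq_one_of_mem_ball hxy⟩

/-! ### Vanishing to finite order and Borel summation -/

/-- Vanishing of all derivatives of order less than `M`. -/
def FlatTo (M : ℕ) (f : E → ℝ) (y : E) : Prop := ∀ m < M, iteratedFDeriv ℝ m f y = 0

theorem FlatTo.mul {U : Set E} (hU : IsOpen U) {f g : E → ℝ} (hf : ContDiffOn ℝ (⊤ : ℕ∞) f U)
    (hg : ContDiffOn ℝ (⊤ : ℕ∞) g U) {y : E} (hy : y ∈ U) {M N : ℕ} (hfM : FlatTo M f y)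
    (hgN : FlatTo N g y) : FlatTo (M + N) (fun x => f x * g x) y := by
  intro m hm
  rw [← norm_le_zero_iff, ← iteratedFDerivWithin_of_isOpen m hU hy]
  refine (norm_iteratedFDerivWithin_mul_le hf hg hU.uniqueDiffOn hy
    (by exact_mod_cast le_top)).trans (Finset.sum_nonpos fun i hi => ?_)
  have := Finset.mem_range.1 hi
  rw [iteratedFDerivWithin_of_isOpen i hU hy, iteratedFDerivWithin_of_isOpen (m - i) hU hy]
  by_cases h : i < M
  · rw [hfM i h]; simp
  · rw [hgN (m - i) (by omega)]; simp

theorem FlatTo.zero (f : E → ℝ) (y : E) : FlatTo 0 f y := fun m hm => absurd hm (by omega)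

theorem FlatTo.pow {U : Set E} (hU : IsOpen U) {f : E → ℝ} (hf : ContDiffOn ℝ (⊤ : ℕ∞) f U)
    {y : E} (hy : y ∈ U) (h0 : f y = 0) (k : ℕ) : FlatTo k (fun x => f x ^ k) y := by
  have h1 : FlatTo 1 f y := fun m hm => by
    obtain rfl : m = 0 := by omega
    rw [← norm_eq_zero, norm_iteratedFDeriv_zero, h0, norm_zero]
  induction k with
  | zero => exact FlatTo.zero _ _
  | succ k ih =>
    simp only [pow_succ]
    exact ih.mul hU (hf.pow k) hf hy h1

/-- Borel summation: a series `∑ gₖ sᵏ` of functions smooth on `U` is realised, as a Taylor series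
along `{s = 0}`, by the smooth function `F = ∑ gₖ sᵏ χ(s/εₖ)` for a suitable sequence `εₖ`. A linear
first-order equation satisfied by each term is inherited by `F`. -/
theorem borel_sum [FiniteDimensional ℝ E] {U : Set E} (hU : IsOpen U) {s : E → ℝ} {g : ℕ → E → ℝ}
    (hs : ContDiffOn ℝ (⊤ : ℕ∞) s U) (hg : ∀ k, ContDiffOn ℝ (⊤ : ℕ∞) (g k) U) :
    ∃ ε : ℕ → ℝ, (∀ k, 0 < ε k) ∧ ∃ F : E → ℝ, ContDiffOn ℝ (⊤ : ℕ∞) F U ∧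
      (∀ y ∈ U, ∀ (z : E) (w : ℝ),
        (∀ k, fderiv ℝ (fun x => g k x * (s x ^ k * chi (s x / ε k))) y z =
          w * (g k y * (s y ^ k * chi (s y / ε k)))) → fderiv ℝ F y z = w * F y) ∧
      (∀ y ∈ U, s y = 0 → ∀ K,
        FlatTo K (fun x => F x - ∑ k ∈ Finset.range K, g k x * s x ^ k) y) := by
  obtain ⟨b, hb, hbc, hbU, hb1⟩ := exists_bump_cover hU
  have hGs : ∀ j k, ContDiff ℝ (⊤ : ℕ∞) (fun x => b j x * g k x) := fun j k =>
    contDiff_mul_of_tsupport hU (hb j) (hbU j) (hg k)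
  have hSs : ∀ j, ContDiff ℝ (⊤ : ℕ∞) (fun x => b j x * s x) := fun j =>
    contDiff_mul_of_tsupport hU (hb j) (hbU j) hs
  have hGc : ∀ j k, HasCompactSupport (fun x => b j x * g k x) := fun j k => (hbc j).mul_right
  have hSc : ∀ j, HasCompactSupport (fun x => b j x * s x) := fun j => (hbc j).mul_right
  -- `C j k` controls the `k`-th term localised by the `j`-th bump; `εₖ` beats `C j k` for all
  -- `j ≤ k`, hence all but finitely many `k` for each fixed `j`.
  choose C hC0 hC using fun j k => borel_term_bound (hGs j k) (hGc j k) (hSs j) (hSc j) k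
  have hD : ∀ k, 0 ≤ ∑ j ∈ Finset.range (k + 1), C j k := fun k =>
    Finset.sum_nonneg fun j _ => hC0 j k
  set ε : ℕ → ℝ := fun k => (1 / 2 : ℝ) ^ k / (1 + ∑ j ∈ Finset.range (k + 1), C j k) with hε
  have hεpos : ∀ k, 0 < ε k := fun k => div_pos (by positivity) (by linarith [hD k])
  have hε1 : ∀ k, ε k ≤ 1 := fun k => by
    have h2 : (1 / 2 : ℝ) ^ k ≤ 1 := pow_le_one₀ (by norm_num) (by norm_num)
    simp only [hε]
    rw [div_le_one (by linarith [hD k])]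
    linarith [hD k]
  have hCε : ∀ j k, j ≤ k → C j k * ε k ≤ (1 / 2 : ℝ) ^ k := fun j k hjk => by
    have h1 : C j k ≤ ∑ j ∈ Finset.range (k + 1), C j k :=
      Finset.single_le_sum (f := fun j => C j k) (fun j _ => hC0 j k)
        (Finset.mem_range.2 (Nat.lt_succ_of_le hjk))
    simp only [hε]
    rw [mul_div_assoc', div_le_iff₀ (by linarith [hD k]), mul_comm]
    have : (0 : ℝ) < (1 / 2) ^ k := by positivity
    gcongr
    linarith
  set u : ℕ → E → ℝ := fun k x => g k x * (s x ^ k * chi (s x / ε k)) with hu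
  set v : ℕ → ℕ → E → ℝ := fun j k x =>
    (b j x * g k x) * ((b j x * s x) ^ k * chi ((b j x * s x) / ε k)) with hv
  have hvs : ∀ j k, ContDiff ℝ (⊤ : ℕ∞) (v j k) := fun j k =>
    (hGs j k).mul (((hSs j).pow k).mul (chi_contDiff.comp ((hSs j).div_const _)))
  have hvc : ∀ j k, HasCompactSupport (v j k) := fun j k => (hGc j k).mul_right
  have key := fun j => tsum_test_functions (hvs j) (hvc j) j
    (fun k hk m hm x => (hC j k (ε k) (hεpos k) (hε1 k) m hm x).trans (hCε j k hk))
  set F : E → ℝ := fun x => ∑' k, u k x with hF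
  have huv : ∀ j x, b j x = 1 → ∀ k, v j k x = u k x := fun j x hx k => by
    simp only [hu, hv, hx, one_mul]
  have hFv : ∀ j y, b j =ᶠ[nhds y] (fun _ => 1) → F =ᶠ[nhds y] fun x => ∑' k, v j k x :=
    fun j y h => by
      filter_upwards [h] with x hx
      simp only [hF]
      exact tsum_congr fun k => (huv j x hx k).symm
  have hFU : ContDiffOn ℝ (⊤ : ℕ∞) F U := fun y hy => by
    obtain ⟨j, hj⟩ := hb1 y hy
    exact ((key j).1.contDiffAt.congr_of_eventuallyEq (hFv j y hj)).contDiffWithinAt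
  refine ⟨ε, hεpos, F, hFU, ?_, ?_⟩
  · intro y hy z w h
    obtain ⟨j, hj⟩ := hb1 y hy
    rw [(hFv j y hj).fderiv_eq, (key j).2.2 y z]
    simp only [hF]
    rw [← tsum_mul_left]
    refine tsum_congr fun k => ?_
    have h1 : v j k =ᶠ[nhds y] u k := by
      filter_upwards [hj] with x hx using huv j x hx k
    rw [h1.fderiv_eq]
    exact h k
  · intro y hy hsy K m hm
    obtain ⟨j, hj⟩ := hb1 y hy
    have hP : ∀ k, ContDiffAt ℝ (⊤ : ℕ∞) (fun x => g k x * s x ^ k) y := fun k =>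
      ((hg k).mul (hs.pow k)).contDiffAt (hU.mem_nhds hy)
    have hPs : ContDiffAt ℝ (⊤ : ℕ∞) (fun x => ∑ k ∈ Finset.range K, g k x * s x ^ k) y :=
      ContDiffAt.sum fun k _ => hP k
    rw [fun_iteratedFDeriv_sub_apply
        ((hFU.contDiffAt (hU.mem_nhds hy)).of_le (by exact_mod_cast le_top))
        (hPs.of_le (by exact_mod_cast le_top)),
      iteratedFDeriv_fun_sum_apply fun k _ => (hP k).of_le (by exact_mod_cast le_top),
      ((hFv j y hj).iteratedFDeriv ℝ m).eq_of_nhds, (key j).2.1 m y, sub_eq_zero]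
    have hscont : ContinuousAt s y := (hs.continuousOn).continuousAt (hU.mem_nhds hy)
    have hvP : ∀ k, v j k =ᶠ[nhds y] fun x => g k x * s x ^ k := fun k => by
      have ht : Filter.Tendsto (fun x => s x / ε k) (nhds y) (nhds 0) := by
        have := hscont.tendsto.div_const (ε k)
        rwa [hsy, zero_div] at this
      filter_upwards [hj, ht.eventually chi_eventually_one] with x hx hx1
      rw [huv j x hx]
      simp only [hu, hx1, mul_one]
    have hvflat : ∀ k, iteratedFDeriv ℝ m (v j k) y =
        iteratedFDeriv ℝ m (fun x => g k x * s x ^ k) y := fun k =>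
      ((hvP k).iteratedFDeriv ℝ m).eq_of_nhds
    simp only [hvflat]
    refine tsum_eq_sum fun k hk => ?_
    have hkK : K ≤ k := by simpa using hk
    have hfl := (FlatTo.zero (g k) y).mul hU (hg k) (hs.pow k) hy (FlatTo.pow hU hs hy hsy k)
    exact hfl m (by omega)

end Borel

section Ambient

variable {p q : ℕ} {U : Set (Idx p q → ℝ)}

/-! ### The matrix `h̃` -/

theorem htMat_mul_self : htMat p q * htMat p q = 1 := by
  ext I J
  rcases I with I | I | I <;> rcases J with J | J | J <;>
    simp [Matrix.mul_apply, Fintype.sum_sum_type, htMat, hMat, Matrix.diagonal_apply,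
      Matrix.one_apply]
  split_ifs <;> first | (exfalso; subst_vars; omega) | norm_num

theorem htMat_inv : (htMat p q)⁻¹ = htMat p q := Matrix.inv_eq_right_inv htMat_mul_self

theorem htMat_symm (I J : Idx p q) : htMat p q I J = htMat p q J I := by
  rcases I with I | I | I <;> rcases J with J | J | J <;>
    simp [htMat, hMat, Matrix.diagonal_apply]
  by_cases h : I = J
  · subst h; rfl
  · rw [if_neg h, if_neg (Ne.symm h)]

/-- `h̃` is its own inverse: raising and then lowering an index does nothing. -/
theorem htMat_contract (I : Idx p q) (a : Idx p q → ℝ) :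
    ∑ J, htMat p q I J * ∑ K, htMat p q J K * a K = a I := by
  have := congrFun (congrArg (fun M => M *ᵥ a) (htMat_mul_self (p := p) (q := q))) I
  simp only [← Matrix.mulVec_mulVec, Matrix.one_mulVec] at this
  simpa [Matrix.mulVec, dotProduct] using this

theorem htMat_sum_sq : ∑ I, ∑ J, htMat p q I J * htMat p q I J = (p + q : ℝ) + 2 := by
  have h : ∀ I : Idx p q, ∑ J, htMat p q I J * htMat p q I J = 1 := fun I => by
    have := congrFun (congrFun (htMat_mul_self (p := p) (q := q)) I) I
    rw [Matrix.mul_apply, Matrix.one_apply_eq] at this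
    rw [← this]
    exact Finset.sum_congr rfl fun J _ => by rw [htMat_symm J I]
  simp only [h]
  simp
  ring

/-! ### The Euler field and the Laplacian -/

/-- `f` is homogeneous of degree `d` on `U` in the infinitesimal sense: the Euler field multiplies
it by `d`. -/
def Hom (U : Set (Idx p q → ℝ)) (d : ℝ) (f : (Idx p q → ℝ) → ℝ) : Prop :=
  ∀ x ∈ U, fderiv ℝ f x x = d * f x

theorem euler_eq (f : (Idx p q → ℝ) → ℝ) (x : Idx p q → ℝ) : euler p q f x = fderiv ℝ f x x := by
  have h : x = ∑ I, x I • Pi.single I (1 : ℝ) := by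
    conv_lhs => rw [pi_eq_sum_univ' x]
  have h2 := congrArg (fderiv ℝ f x) h
  rw [map_sum] at h2
  rw [h2]
  exact Finset.sum_congr rfl fun I _ => by rw [map_smul, smul_eq_mul, pderiv]

theorem diffAt (hU : IsOpen U) {f : (Idx p q → ℝ) → ℝ} (hf : ContDiffOn ℝ (⊤ : ℕ∞) f U)
    {x : Idx p q → ℝ} (hx : x ∈ U) : DifferentiableAt ℝ f x :=
  (hf.contDiffAt (hU.mem_nhds hx)).differentiableAt (by simp)

theorem fderiv_smooth (hU : IsOpen U) {f : (Idx p q → ℝ) → ℝ} (hf : ContDiffOn ℝ (⊤ : ℕ∞) f U) :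
    ContDiffOn ℝ (⊤ : ℕ∞) (fderiv ℝ f) U :=
  hf.fderiv_of_isOpen hU (by simp)

theorem pderiv_smooth (hU : IsOpen U) {f : (Idx p q → ℝ) → ℝ} (hf : ContDiffOn ℝ (⊤ : ℕ∞) f U)
    (I : Idx p q) : ContDiffOn ℝ (⊤ : ℕ∞) (pderiv p q I f) U :=
  (fderiv_smooth hU hf).clm_apply contDiffOn_const

theorem laplt_smooth (hU : IsOpen U) {f : (Idx p q → ℝ) → ℝ} (hf : ContDiffOn ℝ (⊤ : ℕ∞) f U) :
    ContDiffOn ℝ (⊤ : ℕ∞) (laplt p q f) U :=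
  ContDiffOn.sum fun I _ => ContDiffOn.sum fun J _ =>
    contDiffOn_const.mul (pderiv_smooth hU (pderiv_smooth hU hf J) I)

theorem pderiv_congr (hU : IsOpen U) {f g : (Idx p q → ℝ) → ℝ} (h : ∀ x ∈ U, f x = g x)
    (I : Idx p q) : ∀ x ∈ U, pderiv p q I f x = pderiv p q I g x := fun x hx => by
  have : f =ᶠ[nhds x] g := by
    filter_upwards [hU.mem_nhds hx] with z hz using h z hz
  rw [pderiv, pderiv, this.fderiv_eq]

theorem laplt_congr (hU : IsOpen U) {f g : (Idx p q → ℝ) → ℝ} (h : ∀ x ∈ U, f x = g x) :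
    ∀ x ∈ U, laplt p q f x = laplt p q g x := fun x hx =>
  Finset.sum_congr rfl fun I _ => Finset.sum_congr rfl fun J _ => by
    rw [pderiv_congr hU (pderiv_congr hU h J) I x hx]

theorem pderiv_add (hU : IsOpen U) {f g : (Idx p q → ℝ) → ℝ} (hf : ContDiffOn ℝ (⊤ : ℕ∞) f U)
    (hg : ContDiffOn ℝ (⊤ : ℕ∞) g U) (I : Idx p q) : ∀ x ∈ U,
    pderiv p q I (fun x => f x + g x) x = pderiv p q I f x + pderiv p q I g x := fun x hx => by
  simp only [pderiv]
  rw [fderiv_fun_add (diffAt hU hf hx) (diffAt hU hg hx)]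
  rfl

theorem pderiv_mul (hU : IsOpen U) {f g : (Idx p q → ℝ) → ℝ} (hf : ContDiffOn ℝ (⊤ : ℕ∞) f U)
    (hg : ContDiffOn ℝ (⊤ : ℕ∞) g U) (I : Idx p q) : ∀ x ∈ U,
    pderiv p q I (fun x => f x * g x) x = pderiv p q I f x * g x + f x * pderiv p q I g x :=
  fun x hx => by
  simp only [pderiv]
  rw [fderiv_fun_mul (diffAt hU hf hx) (diffAt hU hg hx)]
  simp
  ring

theorem pderiv_const_mul (hU : IsOpen U) {f : (Idx p q → ℝ) → ℝ}
    (hf : ContDiffOn ℝ (⊤ : ℕ∞) f U) (c : ℝ) (I : Idx p q) : ∀ x ∈ U,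
    pderiv p q I (fun x => c * f x) x = c * pderiv p q I f x := fun x hx => by
  simp only [pderiv]
  rw [fderiv_const_mul (diffAt hU hf hx)]
  rfl

theorem laplt_add (hU : IsOpen U) {f g : (Idx p q → ℝ) → ℝ} (hf : ContDiffOn ℝ (⊤ : ℕ∞) f U)
    (hg : ContDiffOn ℝ (⊤ : ℕ∞) g U) : ∀ x ∈ U,
    laplt p q (fun x => f x + g x) x = laplt p q f x + laplt p q g x := fun x hx => by
  simp only [laplt, ← Finset.sum_add_distrib, ← mul_add]
  refine Finset.sum_congr rfl fun I _ => Finset.sum_congr rfl fun J _ => ?_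
  rw [pderiv_congr hU (pderiv_add hU hf hg J) I x hx,
    pderiv_add hU (pderiv_smooth hU hf J) (pderiv_smooth hU hg J) I x hx]

theorem laplt_const_mul (hU : IsOpen U) {f : (Idx p q → ℝ) → ℝ}
    (hf : ContDiffOn ℝ (⊤ : ℕ∞) f U) (c : ℝ) : ∀ x ∈ U,
    laplt p q (fun x => c * f x) x = c * laplt p q f x := fun x hx => by
  simp only [laplt, Finset.mul_sum]
  refine Finset.sum_congr rfl fun I _ => Finset.sum_congr rfl fun J _ => ?_
  rw [pderiv_congr hU (pderiv_const_mul hU hf c J) I x hx,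
    pderiv_const_mul hU (pderiv_smooth hU hf J) c I x hx]
  ring

theorem Hom.const_mul (hU : IsOpen U) {f : (Idx p q → ℝ) → ℝ} {d : ℝ}
    (hf : ContDiffOn ℝ (⊤ : ℕ∞) f U) (h : Hom U d f) (c : ℝ) : Hom U d (fun x => c * f x) :=
  fun x hx => by
  rw [fderiv_const_mul (diffAt hU hf hx), _root_.smul_apply, h x hx, smul_eq_mul]
  ring

theorem Hom.sum (hU : IsOpen U) {ι : Type*} {t : Finset ι} {f : ι → (Idx p q → ℝ) → ℝ} {d : ℝ}
    (hf : ∀ i, ContDiffOn ℝ (⊤ : ℕ∞) (f i) U) (h : ∀ i, Hom U d (f i)) :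
    Hom U d (fun x => ∑ i ∈ t, f i x) := fun x hx => by
  rw [fderiv_fun_sum fun i _ => diffAt hU (hf i) hx, Finset.mul_sum, _root_.sum_apply]
  exact Finset.sum_congr rfl fun i _ => h i x hx

theorem Hom.mul (hU : IsOpen U) {f g : (Idx p q → ℝ) → ℝ} {d e : ℝ}
    (hf : ContDiffOn ℝ (⊤ : ℕ∞) f U) (hg : ContDiffOn ℝ (⊤ : ℕ∞) g U) (hd : Hom U d f)
    (he : Hom U e g) : Hom U (d + e) (fun x => f x * g x) := fun x hx => by
  rw [fderiv_fun_mul (diffAt hU hf hx) (diffAt hU hg hx)]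
  simp only [_root_.add_apply, _root_.smul_apply, smul_eq_mul, hd x hx, he x hx]
  ring

theorem Hom.pow (hU : IsOpen U) {f : (Idx p q → ℝ) → ℝ} {d : ℝ}
    (hf : ContDiffOn ℝ (⊤ : ℕ∞) f U) (hd : Hom U d f) (k : ℕ) :
    Hom U (k * d) (fun x => f x ^ k) := by
  induction k with
  | zero => intro x hx; simp
  | succ k ih =>
    have := ih.mul hU (hf.pow k) hf hd
    simp only [pow_succ]
    convert this using 1
    push_cast; ring

theorem Hom.comp (hU : IsOpen U) {f : (Idx p q → ℝ) → ℝ} {φ : ℝ → ℝ}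
    (hφ : Differentiable ℝ φ) (hf : ContDiffOn ℝ (⊤ : ℕ∞) f U) (h : Hom U 0 f) :
    Hom U 0 (fun x => φ (f x)) := fun x hx => by
  have h1 := (hφ (f x)).hasFDerivAt.comp x (diffAt hU hf hx).hasFDerivAt
  have h2 : fderiv ℝ (fun x => φ (f x)) x = _ := h1.fderiv
  rw [h2, ContinuousLinearMap.comp_apply, h x hx]
  simp

theorem Hom.inv (hU : IsOpen U) {f : (Idx p q → ℝ) → ℝ} {d : ℝ}
    (hf : ContDiffOn ℝ (⊤ : ℕ∞) f U) (h : Hom U d f) (h0 : ∀ x ∈ U, f x ≠ 0) :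
    Hom U (-d) (fun x => (f x)⁻¹) := fun x hx => by
  have h1 := (hasDerivAt_inv (h0 x hx)).hasFDerivAt.comp x (diffAt hU hf hx).hasFDerivAt
  have h2 : fderiv ℝ (fun x => (f x)⁻¹) x = _ := h1.fderiv
  have := h0 x hx
  rw [h2, ContinuousLinearMap.comp_apply, h x hx]
  simp
  field_simp

/-- Differentiating `Xf = d f` and using the symmetry of second derivatives. -/
theorem Hom.pderiv (hU : IsOpen U) {f : (Idx p q → ℝ) → ℝ} {d : ℝ}
    (hf : ContDiffOn ℝ (⊤ : ℕ∞) f U) (h : Hom U d f) (I : Idx p q) :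
    Hom U (d - 1) (pderiv p q I f) := fun x hx => by
  have hf' : DifferentiableAt ℝ (fderiv ℝ f) x :=
    ((fderiv_smooth hU hf).contDiffAt (hU.mem_nhds hx)).differentiableAt (by simp)
  have hsymm : IsSymmSndFDerivAt ℝ f x :=
    (hf.contDiffAt (hU.mem_nhds hx)).isSymmSndFDerivAt
      (by
        rw [minSmoothness_of_isRCLikeNormedField]
        exact WithTop.coe_le_coe.2 (le_top : (2 : ℕ∞) ≤ ⊤))
  have h1 : HasFDerivAt (fun x => fderiv ℝ f x x) _ x :=
    hf'.hasFDerivAt.clm_apply (hasFDerivAt_id x)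
  have h2 : (fun x => fderiv ℝ f x x) =ᶠ[nhds x] fun x => d * f x := by
    filter_upwards [hU.mem_nhds hx] with z hz using h z hz
  have h3 := h2.fderiv_eq (𝕜 := ℝ)
  rw [h1.fderiv, fderiv_const_mul (diffAt hU hf hx)] at h3
  have h4 := congrArg (fun L : (Idx p q → ℝ) →L[ℝ] ℝ => L (Pi.single I (1 : ℝ))) h3
  simp at h4
  have h5 : fderiv ℝ (_root_.pderiv p q I f) x x = fderiv ℝ (fderiv ℝ f) x x (Pi.single I 1) := by
    have : HasFDerivAt (_root_.pderiv p q I f) _ x :=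
      hf'.hasFDerivAt.clm_apply (hasFDerivAt_const (Pi.single I (1 : ℝ) : Idx p q → ℝ) x)
    rw [this.fderiv]
    simp
  rw [h5, hsymm x (Pi.single I 1), _root_.pderiv]
  linarith

theorem Hom.laplt (hU : IsOpen U) {f : (Idx p q → ℝ) → ℝ} {d : ℝ}
    (hf : ContDiffOn ℝ (⊤ : ℕ∞) f U) (h : Hom U d f) : Hom U (d - 2) (laplt p q f) := by
  have hs : ∀ I J, ContDiffOn ℝ (⊤ : ℕ∞) (_root_.pderiv p q I (_root_.pderiv p q J f)) U :=
    fun I J => pderiv_smooth hU (pderiv_smooth hU hf J) I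
  refine Hom.sum hU (fun I => ContDiffOn.sum fun J _ => contDiffOn_const.mul (hs I J)) fun I =>
    Hom.sum hU (fun J => contDiffOn_const.mul (hs I J)) fun J => Hom.const_mul hU (hs I J) ?_ _
  have := (h.pderiv hU hf J).pderiv hU (pderiv_smooth hU hf J) I
  convert this using 1
  ring

/-! ### Commutator of the Laplacian with powers of `Q` -/

theorem QForm_contDiff : ContDiff ℝ (⊤ : ℕ∞) (QForm p q) := by
  unfold QForm
  fun_prop

theorem QForm_pderiv (J : Idx p q) :
    pderiv p q J (QForm p q) = fun x => 2 * ∑ K, htMat p q J K * x K := by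
  funext x
  have h : HasFDerivAt (QForm p q) _ x := HasFDerivAt.fun_sum fun I _ =>
    HasFDerivAt.fun_sum fun J _ =>
      ((hasFDerivAt_apply (𝕜 := ℝ) I x).const_mul (htMat p q I J)).mul (hasFDerivAt_apply J x)
  rw [pderiv, h.fderiv]
  simp [-Fintype.sum_sum_type, Pi.single_apply, Finset.sum_add_distrib, two_mul]
  congr 1 <;> refine Finset.sum_congr rfl fun K _ => ?_
  · rw [htMat_symm]
  · rw [mul_comm]

theorem QForm_pderiv2 (I J : Idx p q) (x : Idx p q → ℝ) :
    pderiv p q I (pderiv p q J (QForm p q)) x = 2 * htMat p q I J := by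
  rw [QForm_pderiv]
  have h : HasFDerivAt (fun x : Idx p q → ℝ => 2 * ∑ K, htMat p q J K * x K) _ x :=
    (HasFDerivAt.fun_sum fun K _ =>
      (hasFDerivAt_apply (𝕜 := ℝ) K x).const_mul (htMat p q J K)).const_mul 2
  rw [pderiv, h.fderiv]
  simp [-Fintype.sum_sum_type, Pi.single_apply]
  rw [htMat_symm]

theorem QForm_hom : Hom U 2 (QForm p q) := fun x _ => by
  rw [← euler_eq, euler]
  simp only [QForm_pderiv, QForm, Finset.mul_sum]
  exact Finset.sum_congr rfl fun I _ => Finset.sum_congr rfl fun J _ => by ring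

/-- `Δ̃(Q f) = Q Δ̃f + (4d + 2(n+2)) f` for `f` homogeneous of degree `d`. -/
theorem laplt_Q_mul (hU : IsOpen U) {f : (Idx p q → ℝ) → ℝ} {d : ℝ}
    (hf : ContDiffOn ℝ (⊤ : ℕ∞) f U) (h : Hom U d f) : ∀ x ∈ U,
    laplt p q (fun x => QForm p q x * f x) x =
      QForm p q x * laplt p q f x + (4 * d + 2 * ((p + q : ℝ) + 2)) * f x := fun x hx => by
  have hQ : ContDiffOn ℝ (⊤ : ℕ∞) (QForm p q) U := QForm_contDiff.contDiffOn
  have hE : ∑ I, x I * pderiv p q I f x = d * f x := by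
    rw [← h x hx, ← euler_eq]; rfl
  have h2 : ∀ I J, pderiv p q I (pderiv p q J (fun x => QForm p q x * f x)) x =
      2 * htMat p q I J * f x + (2 * ∑ K, htMat p q J K * x K) * pderiv p q I f x +
      (2 * ∑ K, htMat p q I K * x K) * pderiv p q J f x +
      QForm p q x * pderiv p q I (pderiv p q J f) x := fun I J => by
    rw [pderiv_congr hU (pderiv_mul hU hQ hf J) I x hx,
      pderiv_add hU ((pderiv_smooth hU hQ J).mul hf) (hQ.mul (pderiv_smooth hU hf J)) I x hx,
      pderiv_mul hU (pderiv_smooth hU hQ J) hf I x hx,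
      pderiv_mul hU hQ (pderiv_smooth hU hf J) I x hx, QForm_pderiv2, QForm_pderiv,
      QForm_pderiv]
    ring
  have hA : ∑ I, ∑ J, htMat p q I J * (2 * htMat p q I J * f x) =
      2 * ((p + q : ℝ) + 2) * f x := by
    rw [← htMat_sum_sq, Finset.mul_sum, Finset.sum_mul]
    refine Finset.sum_congr rfl fun I _ => ?_
    rw [Finset.mul_sum, Finset.sum_mul]
    exact Finset.sum_congr rfl fun J _ => by ring
  have hB : ∑ I, ∑ J, htMat p q I J * ((2 * ∑ K, htMat p q J K * x K) * pderiv p q I f x) =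
      2 * d * f x := by
    rw [mul_assoc, ← hE, Finset.mul_sum]
    refine Finset.sum_congr rfl fun I _ => ?_
    conv_rhs => rw [← htMat_contract I x, Finset.sum_mul, Finset.mul_sum]
    exact Finset.sum_congr rfl fun J _ => by ring
  have hC : ∑ I, ∑ J, htMat p q I J * ((2 * ∑ K, htMat p q I K * x K) * pderiv p q J f x) =
      2 * d * f x := by
    rw [← hB, Finset.sum_comm]
    exact Finset.sum_congr rfl fun I _ => Finset.sum_congr rfl fun J _ => by rw [htMat_symm]
  have hD : ∑ I, ∑ J, htMat p q I J * (QForm p q x * pderiv p q I (pderiv p q J f) x) =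
      QForm p q x * ∑ I, ∑ J, htMat p q I J * pderiv p q I (pderiv p q J f) x := by
    simp only [Finset.mul_sum]
    exact Finset.sum_congr rfl fun I _ => Finset.sum_congr rfl fun J _ => by ring
  simp only [laplt, htMat_inv, h2, mul_add, Finset.sum_add_distrib, hA, hB, hC, hD]
  ring

/-- The commutator `[Δ̃, Q^{k+1}] = 4(k+1) Q^k (X + n/2 + k + 1)` on functions homogeneous of
degree `d`. -/
theorem laplt_Q_pow_mul (hU : IsOpen U) {f : (Idx p q → ℝ) → ℝ} {d : ℝ}
    (hf : ContDiffOn ℝ (⊤ : ℕ∞) f U) (h : Hom U d f) (k : ℕ) : ∀ x ∈ U,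
    laplt p q (fun x => QForm p q x ^ (k + 1) * f x) x =
      QForm p q x ^ (k + 1) * laplt p q f x +
        4 * (k + 1) * (d + (p + q : ℝ) / 2 + (k + 1)) * (QForm p q x ^ k * f x) := by
  have hQ : ContDiffOn ℝ (⊤ : ℕ∞) (QForm p q) U := QForm_contDiff.contDiffOn
  induction k with
  | zero =>
    intro x hx
    have := laplt_Q_mul hU hf h x hx
    simp only [zero_add, pow_one, this]
    push_cast; ring
  | succ k ih =>
    intro x hx
    have h1 : (fun x => QForm p q x ^ (k + 1 + 1) * f x) =
        fun x => QForm p q x * (QForm p q x ^ (k + 1) * f x) := by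
      funext x; ring
    have h2 := laplt_Q_mul hU ((hQ.pow (k + 1)).mul hf)
      (Hom.mul hU (hQ.pow (k + 1)) hf (QForm_hom.pow hU hQ (k + 1)) h) x hx
    rw [h1, h2, ih x hx]
    push_cast; ring

/-! ### Vanishing order of derivatives -/

theorem FlatTo.congr {f g : (Idx p q → ℝ) → ℝ} {y : Idx p q → ℝ} {M : ℕ}
    (h : f =ᶠ[nhds y] g) (hg : FlatTo M g y) : FlatTo M f y := fun m hm => by
  rw [(h.iteratedFDeriv ℝ m).eq_of_nhds]
  exact hg m hm

theorem FlatTo.sum (hU : IsOpen U) {ι : Type*} {t : Finset ι} {f : ι → (Idx p q → ℝ) → ℝ}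
    (hf : ∀ i, ContDiffOn ℝ (⊤ : ℕ∞) (f i) U) {y : Idx p q → ℝ} (hy : y ∈ U) {M : ℕ}
    (h : ∀ i, FlatTo M (f i) y) : FlatTo M (fun x => ∑ i ∈ t, f i x) y := fun m hm => by
  rw [iteratedFDeriv_fun_sum_apply fun i _ =>
    ((hf i).contDiffAt (hU.mem_nhds hy)).of_le (by exact_mod_cast le_top)]
  exact Finset.sum_eq_zero fun i _ => h i m hm

theorem FlatTo.pderiv (hU : IsOpen U) {f : (Idx p q → ℝ) → ℝ} (hf : ContDiffOn ℝ (⊤ : ℕ∞) f U)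
    {y : Idx p q → ℝ} (hy : y ∈ U) {M : ℕ} (h : FlatTo (M + 1) f y) (I : Idx p q) :
    FlatTo M (pderiv p q I f) y := fun m hm => by
  rw [← norm_le_zero_iff]
  refine (norm_iteratedFDeriv_clm_apply_const (n := m)
    ((fderiv_smooth hU hf).contDiffAt (hU.mem_nhds hy)) (by exact_mod_cast le_top)).trans ?_
  rw [norm_iteratedFDeriv_fderiv, h (m + 1) (by omega)]
  simp

theorem FlatTo.laplt (hU : IsOpen U) {f : (Idx p q → ℝ) → ℝ} (hf : ContDiffOn ℝ (⊤ : ℕ∞) f U)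
    {y : Idx p q → ℝ} (hy : y ∈ U) {M : ℕ} (h : FlatTo (M + 2) f y) :
    FlatTo M (laplt p q f) y := by
  have hs : ∀ I J, ContDiffOn ℝ (⊤ : ℕ∞) (_root_.pderiv p q I (_root_.pderiv p q J f)) U :=
    fun I J => pderiv_smooth hU (pderiv_smooth hU hf J) I
  refine FlatTo.sum hU (fun I => ContDiffOn.sum fun J _ => contDiffOn_const.mul (hs I J)) hy
    fun I => FlatTo.sum hU (fun J => contDiffOn_const.mul (hs I J)) hy fun J => ?_
  have h1 := FlatTo.pderiv hU (pderiv_smooth hU hf J) hy (FlatTo.pderiv hU hf hy h J) I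
  have h2 := (FlatTo.zero (fun _ => (htMat p q)⁻¹ I J) y).mul hU contDiffOn_const (hs I J) hy h1
  rwa [zero_add] at h2

/-! ### The formal solution -/

/-- The coefficients of the formal solution `∑ Qᵏ fₖ`: `f₀` is given and
`4k (w + n/2 - k) fₖ = -Δ̃fₖ₋₁`. -/
def coeffF (p q : ℕ) (w : ℝ) (f0 : (Idx p q → ℝ) → ℝ) : ℕ → (Idx p q → ℝ) → ℝ
  | 0 => f0
  | k + 1 => fun x =>
      -(4 * (k + 1) * (w + (p + q : ℝ) / 2 - (k + 1)))⁻¹ * laplt p q (coeffF p q w f0 k) x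

theorem coeffF_spec (hU : IsOpen U) {w : ℝ} {f0 : (Idx p q → ℝ) → ℝ}
    (hf : ContDiffOn ℝ (⊤ : ℕ∞) f0 U) (h : Hom U w f0) (k : ℕ) :
    ContDiffOn ℝ (⊤ : ℕ∞) (coeffF p q w f0 k) U ∧ Hom U (w - 2 * k) (coeffF p q w f0 k) := by
  induction k with
  | zero => exact ⟨hf, by simpa using! h⟩
  | succ k ih =>
    have hs := laplt_smooth hU ih.1
    refine ⟨contDiffOn_const.mul hs, ?_⟩
    have := (ih.2.laplt hU ih.1).const_mul hU hs
      (-(4 * (k + 1) * (w + (p + q : ℝ) / 2 - (k + 1)))⁻¹)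
    have e : w - 2 * ((k + 1 : ℕ) : ℝ) = w - 2 * k - 2 := by push_cast; ring
    rw [e]
    exact this

/-- The Laplacian of the partial sums of the formal solution telescopes. -/
theorem laplt_partial_sum (hU : IsOpen U) {w : ℝ}
    (hw : ∀ k : ℕ, 0 < k → w + (p + q : ℝ) / 2 ≠ (k : ℝ)) {f0 : (Idx p q → ℝ) → ℝ}
    (hf : ContDiffOn ℝ (⊤ : ℕ∞) f0 U) (h : Hom U w f0) (K : ℕ) : ∀ x ∈ U,
    laplt p q (fun x => ∑ k ∈ Finset.range (K + 1), QForm p q x ^ k * coeffF p q w f0 k x) x =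
      QForm p q x ^ K * laplt p q (coeffF p q w f0 K) x := by
  have hQ : ContDiffOn ℝ (⊤ : ℕ∞) (QForm p q) U := QForm_contDiff.contDiffOn
  have hs : ∀ k, ContDiffOn ℝ (⊤ : ℕ∞) (fun x => QForm p q x ^ k * coeffF p q w f0 k x) U :=
    fun k => (hQ.pow k).mul (coeffF_spec hU hf h k).1
  induction K with
  | zero => intro x _; simp
  | succ K ih =>
    intro x hx
    simp only [Finset.sum_range_succ _ (K + 1)]
    rw [laplt_add hU (ContDiffOn.sum fun k _ => hs k) (hs (K + 1)) x hx, ih x hx,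
      laplt_Q_pow_mul hU (coeffF_spec hU hf h (K + 1)).1 (coeffF_spec hU hf h (K + 1)).2 K x hx]
    have h1 : w + (p + q : ℝ) / 2 - (K + 1) ≠ 0 := by
      have := hw (K + 1) (by omega)
      push_cast at this
      exact sub_ne_zero.2 this
    have h2 : (K + 1 : ℝ) ≠ 0 := by positivity
    have h3 : 4 * (K + 1 : ℝ) * (w + (p + q : ℝ) / 2 - (K + 1)) * coeffF p q w f0 (K + 1) x =
        -laplt p q (coeffF p q w f0 K) x := by
      rw [coeffF]
      generalize w + (p + q : ℝ) / 2 - (K + 1) = a at h1 ⊢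
      field_simp
    push_cast
    linear_combination QForm p q x ^ K * h3

/-! ### The squared Euclidean norm -/

/-- The squared Euclidean norm; a positive function, homogeneous of degree `2`, which makes `Q / r`
homogeneous of degree `0`. -/
def rsq (p q : ℕ) (x : Idx p q → ℝ) : ℝ := ∑ I, x I * x I

theorem rsq_contDiff : ContDiff ℝ (⊤ : ℕ∞) (rsq p q) := by
  unfold rsq
  fun_prop

theorem rsq_hom : Hom U 2 (rsq p q) := fun x _ => by
  have h : HasFDerivAt (rsq p q) _ x := HasFDerivAt.fun_sum fun I _ =>
    (hasFDerivAt_apply (𝕜 := ℝ) I x).mul (hasFDerivAt_apply I x)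
  rw [h.fderiv]
  simp [-Fintype.sum_sum_type, Finset.sum_add_distrib, rsq, two_mul]

theorem rsq_ne_zero {x : Idx p q → ℝ} (hx : x ≠ 0) : rsq p q x ≠ 0 := fun h => hx <| by
  rw [rsq, Finset.sum_eq_zero_iff_of_nonneg fun I _ => mul_self_nonneg (x I)] at h
  funext I
  exact mul_self_eq_zero.1 (h I (Finset.mem_univ I))

end Ambient

/-- Existence of a homogeneous harmonic extension, to infinite order along the
null cone, of a density of weight `w` in the unobstructed case `w + n/2 ∉ ℕ₊`. -/
theorem statement10 (p q : ℕ) (hn : 3 ≤ p + q)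
    (w : ℝ) (hw : ∀ k : ℕ, 0 < k → w + (p + q : ℝ) / 2 ≠ (k : ℝ))
    (U : Set (Idx p q → ℝ)) (hU : IsOpenCone p q U)
    (ft0 : (Idx p q → ℝ) → ℝ) (hft0 : ContDiffOn ℝ (⊤ : ℕ∞) ft0 U)
    (hhom0 : ∀ x ∈ U, euler p q ft0 x = w * ft0 x) :
    ∃ ft : (Idx p q → ℝ) → ℝ,
      ContDiffOn ℝ (⊤ : ℕ∞) ft U ∧
      (∀ x ∈ U, euler p q ft x = w * ft x) ∧
      (∀ y ∈ nullCone p q ∩ U, ft y = ft0 y) ∧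
      (∀ y ∈ nullCone p q ∩ U, VanishesToInfOrderAt p q (laplt p q ft) y) := by
  obtain ⟨hUo, hU0, -⟩ := hU
  have hom0 : Hom U w ft0 := fun x hx => by rw [← euler_eq]; exact hhom0 x hx
  have hQ : ContDiffOn ℝ (⊤ : ℕ∞) (QForm p q) U := QForm_contDiff.contDiffOn
  have hr : ContDiffOn ℝ (⊤ : ℕ∞) (rsq p q) U := rsq_contDiff.contDiffOn
  have hr0 : ∀ x ∈ U, rsq p q x ≠ 0 := fun x hx => rsq_ne_zero (hU0 x hx)
  have hri : ContDiffOn ℝ (⊤ : ℕ∞) (fun x => (rsq p q x)⁻¹) U := hr.inv hr0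
  have hrih : Hom U (-2) (fun x => (rsq p q x)⁻¹) := rsq_hom.inv hUo hr hr0
  set f := coeffF p q w ft0 with hf
  have hfs : ∀ k, ContDiffOn ℝ (⊤ : ℕ∞) (f k) U := fun k => (coeffF_spec hUo hft0 hom0 k).1
  have hfh : ∀ k : ℕ, Hom U (w - 2 * k) (f k) := fun k => (coeffF_spec hUo hft0 hom0 k).2
  -- Borel summation is applied with `s = Q / r`, homogeneous of degree `0`, so that the cutoffs
  -- preserve homogeneity; the factor `r ^ k` turns `s ^ k` back into `Q ^ k`.
  set s : (Idx p q → ℝ) → ℝ := fun x => QForm p q x * (rsq p q x)⁻¹ with hs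
  set g : ℕ → (Idx p q → ℝ) → ℝ := fun k x => f k x * rsq p q x ^ k with hg
  have hss : ContDiffOn ℝ (⊤ : ℕ∞) s U := hQ.mul hri
  have hsh : Hom U 0 s := by
    have := QForm_hom.mul hUo hQ hri hrih
    rwa [add_neg_cancel] at this
  have hgs : ∀ k, ContDiffOn ℝ (⊤ : ℕ∞) (g k) U := fun k => (hfs k).mul (hr.pow k)
  have hgh : ∀ k, Hom U w (g k) := fun k => by
    have := (hfh k).mul hUo (hfs k) (hr.pow k) (rsq_hom.pow hUo hr k)
    convert this using 1
    ring
  obtain ⟨ε, -, F, hF, hFE, hFflat⟩ := borel_sum hUo hss hgs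
  have hflat : ∀ y ∈ nullCone p q ∩ U, ∀ K, FlatTo K
      (fun x => F x - ∑ k ∈ Finset.range K, QForm p q x ^ k * f k x) y := fun y hy K => by
    refine FlatTo.congr ?_ (hFflat y hy.2 (by simp only [hs, hy.1.2, zero_mul]) K)
    filter_upwards [hUo.mem_nhds hy.2] with x hx
    congr 1
    refine Finset.sum_congr rfl fun k _ => ?_
    have := hr0 x hx
    simp only [hs, hg, mul_pow, inv_pow]
    field_simp
  refine ⟨F, hF, fun x hx => ?_, fun y hy => ?_, fun y hy m => ?_⟩
  · rw [euler_eq]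
    refine hFE x hx x w fun k => ?_
    have hχ : Differentiable ℝ fun t : ℝ => t ^ k * chi (t / ε k) :=
      ((contDiff_id.pow k).mul
        (chi_contDiff.comp (contDiff_id.div_const _))).differentiable (by simp)
    have hχs : ContDiffOn ℝ (⊤ : ℕ∞) (fun x => s x ^ k * chi (s x / ε k)) U :=
      (hss.pow k).mul (chi_contDiff.comp_contDiffOn (hss.div_const _))
    have := (hgh k).mul hUo (hgs k) hχs (hsh.comp hUo hχ hss)
    rw [add_zero] at this
    exact this x hx
  · have := hflat y hy 1 0 one_pos
    rw [← norm_eq_zero, norm_iteratedFDeriv_zero, norm_eq_zero] at this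
    simp only [Finset.range_one, Finset.sum_singleton, pow_zero, one_mul] at this
    exact sub_eq_zero.1 this
  · set P : (Idx p q → ℝ) → ℝ :=
      fun x => ∑ k ∈ Finset.range (m + 3), QForm p q x ^ k * f k x with hP
    have hPs : ContDiffOn ℝ (⊤ : ℕ∞) P U := ContDiffOn.sum fun k _ => (hQ.pow k).mul (hfs k)
    have hRs : ContDiffOn ℝ (⊤ : ℕ∞) (fun x => F x - P x) U := hF.sub hPs
    have h1 : FlatTo (m + 1) (laplt p q (fun x => F x - P x)) y :=
      FlatTo.laplt hUo hRs hy.2 (hflat y hy (m + 3))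
    have hLs := laplt_smooth hUo (hfs (m + 2))
    have h2 : FlatTo (m + 2 + 0) (fun x => QForm p q x ^ (m + 2) * laplt p q (f (m + 2)) x) y :=
      (FlatTo.pow hUo hQ hy.2 hy.1.2 (m + 2)).mul hUo (hQ.pow _) hLs hy.2 (FlatTo.zero _ _)
    have h3 : laplt p q F =ᶠ[nhds y] fun x => laplt p q (fun x => F x - P x) x +
        QForm p q x ^ (m + 2) * laplt p q (f (m + 2)) x := by
      filter_upwards [hUo.mem_nhds hy.2] with x hx
      rw [← laplt_partial_sum hUo hw hft0 hom0 (m + 2) x hx, ← laplt_add hUo hRs hPs x hx]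
      exact laplt_congr hUo (fun x _ => by simp) x hx
    rw [(h3.iteratedFDeriv ℝ m).eq_of_nhds, fun_iteratedFDeriv_add_apply
      (((laplt_smooth hUo hRs).contDiffAt (hUo.mem_nhds hy.2)).of_le (by exact_mod_cast le_top))
      ((((hQ.pow _).mul hLs).contDiffAt (hUo.mem_nhds hy.2)).of_le (by exact_mod_cast le_top)),
      h1 m (by omega), h2 m (by omega), add_zero]
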